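/- For every ε > 0 there exists N such that for every integer n ≥ N and every order-n Latin square L, the number of transversals of L is at most ((1 + ε) · n / e^2)^n. -/

import Mathlib

/-- An order-`n` Latin square: an `n × n` array with entries in `Fin n` such that
every row and every column contains each symbol exactly once. -/
def IsLatinSquare (n : ℕ) (L : Fin n → Fin n → Fin n) : Prop :=
  (∀ i : Fin n, Function.Bijective (L i)) ∧
  (∀ j : Fin n, Function.Bijective (fun i => L i j))

/-!
The proof is a discrete, entropy-free form of the Glebov–Luria argument.

Give every row `i` an arrival time `α i ∈ {0, …, n - 1}`. Given a placement `X` of one cell per row,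
let `N i` be the number of columns available to row `i`: those whose column and symbol are not used
by a row arriving strictly earlier. Since `N i` depends only on the earlier rows, choosing the
cells greedily and uniformly gives the Kraft-type inequality `∑ X, ∏ i, 1 / N i ≤ 1`, the sum being
over all transversals (`sum_transversals_le_one`).

Now average over all `α`. For a fixed transversal, a column `j` other than the one used in row `i`
is blocked by exactly two rows, the one using column `j` and the one using symbol `L i j`; these
and `i` are distinct. With `m = n - α i`, column `j` is thus available for a proportion at most
`(m / n) ^ 2` of the `α`, so `N i` averages at most `1 + m ^ 2 / n`
(`sum_card_avail_le`). By Jensen's inequality for `log` and `exp`, used through tangent lines, each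
transversal contributes on average at least `1 / ∏ m, (1 + m ^ 2 / n)` to the Kraft sum, which
bounds the number of transversals by `∏ m ∈ {1, …, n}, (1 + m ^ 2 / n)` (`card_le_prod`).

Finally `1 + m ^ 2 / n ≤ (m ^ 2 / n) * exp (2 √n / m)`, so this product is at most
`n! ^ 2 / n ^ n * exp (2 √n (1 + log n))`, and Stirling's formula turns it into
`(n / e ^ 2) ^ n * exp (o(n))`.
-/

open Finset Filter Asymptotics

/-- Resampling one coordinate: `(X, b) ↦ (update X a b, X a)` is an involution. -/
lemma sum_resample {ι A : Type*} [Fintype ι] [DecidableEq ι] [Fintype A]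
    (a : ι) (F : (ι → A) → ℝ) :
    ∑ X : ι → A, ∑ b : A, F (Function.update X a b) = Fintype.card A * ∑ X : ι → A, F X := by
  classical
  let e : (ι → A) × A → (ι → A) × A := fun p => (Function.update p.1 a p.2, p.1 a)
  have he : Function.Involutive e := by
    rintro ⟨X, b⟩
    simp [e]
  have h1 := Equiv.sum_comp he.toPerm (fun p : (ι → A) × A => F p.1)
  simp only [Fintype.sum_prod_type, Function.Involutive.coe_toPerm, e] at h1
  rw [h1]
  simp [Finset.mul_sum]

/-- Kraft's inequality for weights `w i X` that form a sub-probability distribution in the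
coordinate `X i`, given the coordinates with strictly smaller `α`. Coordinates with equal `α` do not
influence each other's weights. -/
lemma sum_prod_weight_le {ι A : Type*} [Fintype ι] [DecidableEq ι] [Fintype A]
    (α : ι → ℕ) (w : ι → (ι → A) → ℝ) (hw0 : ∀ i X, 0 ≤ w i X)
    (hdep : ∀ i a X b, a ≠ i → α i ≤ α a → w i (Function.update X a b) = w i X)
    (hw1 : ∀ i X, ∑ b, w i (Function.update X i b) ≤ 1) (s : Finset ι) :
    (Fintype.card A : ℝ) ^ #s * ∑ X : ι → A, ∏ i ∈ s, w i X
      ≤ (Fintype.card A : ℝ) ^ Fintype.card ι := by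
  classical
  refine Finset.induction_on_max_value α s (by simp) fun a s has hmax ih => ?_
  refine le_trans ?_ ih
  rw [card_insert_of_notMem has, pow_succ, mul_assoc, ← sum_resample a]
  refine mul_le_mul_of_nonneg_left (sum_le_sum fun X _ => ?_) (by positivity)
  have h : ∀ b, ∏ i ∈ insert a s, w i (Function.update X a b)
      = w a (Function.update X a b) * ∏ i ∈ s, w i X := by
    intro b
    rw [prod_insert has]
    congr 1
    refine prod_congr rfl fun i hi => hdep i a X b ?_ (hmax i hi)
    rintro rfl
    exact has hi
  simp_rw [h]
  rw [← sum_mul]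
  exact mul_le_of_le_one_left (prod_nonneg fun i _ => hw0 i X) (hw1 a X)

/-- The columns available to row `i`: those for which neither the column nor the symbol in row `i`
is used by the placement `X` in a row with strictly smaller `α`. -/
def avail {n : ℕ} (L : Fin n → Fin n → Fin n) (α X : Fin n → Fin n) (i : Fin n) :
    Finset (Fin n) :=
  univ.filter fun j => ∀ r, α r < α i → X r ≠ j ∧ L r (X r) ≠ L i j

lemma avail_update {n : ℕ} (L : Fin n → Fin n → Fin n) (α X : Fin n → Fin n) (i a b : Fin n)
    (h : α i ≤ α a) : avail L α (Function.update X a b) i = avail L α X i := by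
  ext j
  simp only [avail, mem_filter, mem_univ, true_and]
  refine forall_congr' fun r => imp_congr_right fun hr => ?_
  have : r ≠ a := by
    rintro rfl
    exact absurd h (not_le.2 hr)
  rw [Function.update_of_ne this]

lemma mem_avail {n : ℕ} (L : Fin n → Fin n → Fin n) (α : Fin n → Fin n) (τ : Equiv.Perm (Fin n))
    (hτ : Function.Injective (fun i => L i (τ i))) (i : Fin n) : τ i ∈ avail L α τ i := by
  simp only [avail, mem_filter, mem_univ, true_and]
  intro r hr
  have : r ≠ i := by
    rintro rfl
    exact lt_irrefl _ hr
  exact ⟨fun h => this (τ.injective h), fun h => this (hτ h)⟩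

/-- Weighting a transversal by the probability that uniform choices among the available columns
produce it gives total weight at most one, for any arrival times `α`. -/
lemma sum_transversals_le_one {n : ℕ} (hn : 0 < n) (L : Fin n → Fin n → Fin n)
    (α : Fin n → Fin n) :
    ∑ τ : {τ : Equiv.Perm (Fin n) // Function.Injective (fun i => L i (τ i))},
      ∏ i, ((#(avail L α τ.1 i) : ℝ))⁻¹ ≤ 1 := by
  classical
  let w : Fin n → (Fin n → Fin n) → ℝ := fun i X =>
    if X i ∈ avail L α X i then ((#(avail L α X i) : ℝ))⁻¹ else 0
  have hw0 : ∀ i X, 0 ≤ w i X := by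
    intro i X
    simp only [w]
    split_ifs <;> positivity
  have key := sum_prod_weight_le (fun i => (α i : ℕ)) w hw0 ?_ ?_ univ
  · simp only [card_univ, Fintype.card_fin] at key
    have hpos : (0 : ℝ) < (n : ℝ) ^ n := by positivity
    have key' : ∑ X : Fin n → Fin n, ∏ i, w i X ≤ 1 := by
      by_contra! h
      nlinarith
    refine le_trans ?_ key'
    have hinj : Function.Injective
        (fun τ : {τ : Equiv.Perm (Fin n) // Function.Injective (fun i => L i (τ i))} =>
          (τ.1 : Fin n → Fin n)) := by
      intro σ τ h
      exact Subtype.ext (DFunLike.coe_injective h)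
    calc _ = ∑ τ : {τ : Equiv.Perm (Fin n) // Function.Injective (fun i => L i (τ i))},
            ∏ i, w i (τ.1 : Fin n → Fin n) := by
          refine sum_congr rfl fun τ _ => prod_congr rfl fun i _ => ?_
          simp only [w]
          rw [if_pos (mem_avail L α τ.1 τ.2 i)]
      _ = ∑ X ∈ univ.image
            (fun τ : {τ : Equiv.Perm (Fin n) // Function.Injective (fun i => L i (τ i))} =>
              (τ.1 : Fin n → Fin n)), ∏ i, w i X := by
          rw [sum_image (fun _ _ _ _ h => hinj h)]
      _ ≤ _ := sum_le_sum_of_subset_of_nonneg (subset_univ _)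
          (fun X _ _ => prod_nonneg fun i _ => hw0 i X)
  · intro i a X b hai h
    simp only [w]
    rw [avail_update L α X i a b h, Function.update_of_ne hai.symm]
  · intro i X
    simp only [w, avail_update L α X i i _ le_rfl, Function.update_self]
    rw [← sum_filter]
    simp only [filter_univ_mem, sum_const, nsmul_eq_mul]
    exact mul_inv_le_one

/-! ### Averaging over arrival times -/

lemma sum_arrival {n : ℕ} (i : Fin n) (f : Fin n → ℝ) :
    n * ∑ α : Fin n → Fin n, f (α i) = (n : ℝ) ^ n * ∑ k, f k := by
  have := sum_resample (A := Fin n) i (fun α => f (α i))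
  simp only [Function.update_self, sum_const, card_univ, Fintype.card_fin, nsmul_eq_mul,
    Fintype.card_pi, prod_const, Nat.cast_pow] at this
  exact this.symm

/-- Row `i` arrives no later than two other rows: resample the arrival times of `r`, `s` and `i`
in turn. -/
lemma sum_arrival_before_two {n : ℕ} (i r s : Fin n) (hri : r ≠ i) (hsi : s ≠ i) (hrs : r ≠ s)
    (f : Fin n → ℝ) :
    n ^ 3 * ∑ α : Fin n → Fin n, (if α i ≤ α r ∧ α i ≤ α s then f (α i) else 0)
      = (n : ℝ) ^ n * ∑ k : Fin n, (n - (k : ℕ) : ℝ) ^ 2 * f k := by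
  have hcount : ∀ k : Fin n, ∀ x : ℝ, ∑ b : Fin n, (if k ≤ b then x else 0)
      = (n - (k : ℕ) : ℝ) * x := by
    intro k x
    rw [← sum_filter, sum_const, nsmul_eq_mul]
    have h1 : (univ.filter fun b : Fin n => k ≤ b) = Ici k := by
      ext b
      simp
    rw [h1, Fin.card_Ici, Nat.cast_sub k.2.le]
  have h1 := sum_resample (A := Fin n) r
    (fun α : Fin n → Fin n => if α i ≤ α r ∧ α i ≤ α s then f (α i) else 0)
  have h2 := sum_resample (A := Fin n) s
    (fun α : Fin n → Fin n => if α i ≤ α s then (n - (α i : ℕ) : ℝ) * f (α i) else 0)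
  simp only [Function.update_self, Function.update_of_ne hri.symm, Function.update_of_ne hrs.symm,
    Function.update_of_ne hsi.symm, ite_and, Fintype.card_fin, hcount] at h1 h2
  have h4 := sum_arrival i (fun k => (n - (k : ℕ) : ℝ) * ((n - (k : ℕ) : ℝ) * f k))
  simp only [mul_ite, mul_zero] at h1
  rw [h1] at h2
  rw [h2] at h4
  simp only [ite_and]
  rw [pow_succ, pow_two, mul_assoc, mul_assoc, h4]
  refine congrArg _ (sum_congr rfl fun k _ => ?_)
  ring

/-- The bound for the mean number of columns available to a row arriving at time `k`. -/
noncomputable def meanBound (n : ℕ) (k : Fin n) : ℝ := 1 + (n - (k : ℕ) : ℝ) ^ 2 / n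

lemma meanBound_pos {n : ℕ} (k : Fin n) : 0 < meanBound n k := by
  unfold meanBound
  positivity

/-- Divided by `meanBound` at the arrival time of row `i`, the number of columns available to that
row has mean at most one over all `α`. -/
lemma sum_card_avail_le {n : ℕ} (hn : 0 < n) (L : Fin n → Fin n → Fin n)
    (hL : IsLatinSquare n L) (τ : Equiv.Perm (Fin n))
    (hτ : Function.Injective (fun i => L i (τ i))) (i : Fin n) :
    ∑ α : Fin n → Fin n, (#(avail L α τ i) : ℝ) / meanBound n (α i) ≤ (n : ℝ) ^ n := by
  classical
  have hn' : (0 : ℝ) < n := by exact_mod_cast hn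
  have hc := fun k : Fin n => meanBound_pos k
  set A : ℝ := (n : ℝ) ^ n * ∑ k : Fin n, (n - (k : ℕ) : ℝ) ^ 2 * (meanBound n k)⁻¹ with hA
  have hA0 : 0 ≤ A := by
    refine mul_nonneg (by positivity) (sum_nonneg fun k _ => ?_)
    exact mul_nonneg (sq_nonneg _) (inv_nonneg.2 (hc k).le)
  set B : ℝ := (n : ℝ) ^ n * ∑ k, (meanBound n k)⁻¹ with hB
  have hcard : ∀ α, (#(avail L α τ i) : ℝ) / meanBound n (α i)
      = ∑ j, if j ∈ avail L α τ i then (meanBound n (α i))⁻¹ else 0 := by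
    intro α
    rw [← sum_filter]
    simp [div_eq_mul_inv]
  simp_rw [hcard]
  rw [sum_comm, ← add_sum_erase univ _ (mem_univ (τ i))]
  have hself : ∑ α : Fin n → Fin n, (if τ i ∈ avail L α τ i then (meanBound n (α i))⁻¹ else 0)
      = B / n := by
    rw [eq_div_iff hn'.ne', hB, ← sum_arrival i, mul_comm]
    simp only [mem_avail L _ τ hτ i, if_true]
  have hother : ∀ j ∈ univ.erase (τ i),
      ∑ α : Fin n → Fin n, (if j ∈ avail L α τ i then (meanBound n (α i))⁻¹ else 0)
        ≤ A / n ^ 3 := by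
    intro j hj
    have hj : j ≠ τ i := ne_of_mem_erase hj
    -- The two rows of the transversal that block column `j` for row `i`.
    obtain ⟨r, hr⟩ := τ.surjective j
    obtain ⟨s, hs⟩ := (Finite.injective_iff_surjective.1 hτ) (L i j)
    simp only at hs
    have hri : r ≠ i := by
      rintro rfl
      exact hj hr.symm
    have hsi : s ≠ i := by
      rintro rfl
      exact hj ((hL.1 s).1 hs).symm
    have hrs : r ≠ s := by
      rintro rfl
      rw [hr] at hs
      exact hri ((hL.2 j).1 hs)
    rw [le_div_iff₀ (by positivity), hA, ← sum_arrival_before_two i r s hri hsi hrs, mul_comm]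
    refine mul_le_mul_of_nonneg_left (sum_le_sum fun α _ => ?_) (by positivity)
    have hinv : 0 ≤ (meanBound n (α i))⁻¹ := inv_nonneg.2 (hc _).le
    by_cases hm : j ∈ avail L α τ i
    · have hm' := hm
      simp only [avail, mem_filter, mem_univ, true_and] at hm'
      have h1 : α i ≤ α r := not_lt.1 fun h => (hm' r h).1 hr
      have h2 : α i ≤ α s := not_lt.1 fun h => (hm' s h).2 hs
      rw [if_pos hm, if_pos ⟨h1, h2⟩]
    · rw [if_neg hm]
      split_ifs
      · exact hinv
      · exact le_rfl
  rw [hself]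
  have hsum := sum_le_sum hother
  rw [sum_const, nsmul_eq_mul, card_erase_of_mem (mem_univ _), card_univ, Fintype.card_fin] at hsum
  have hle : ((n - 1 : ℕ) : ℝ) * (A / n ^ 3) ≤ n * (A / n ^ 3) := by
    refine mul_le_mul_of_nonneg_right ?_ (by positivity)
    exact_mod_cast Nat.sub_le n 1
  have hone : ∑ k : Fin n, ((meanBound n k)⁻¹ + (n - (k : ℕ) : ℝ) ^ 2 * (meanBound n k)⁻¹ / n)
      = n := by
    have : ∀ k : Fin n,
        (meanBound n k)⁻¹ + (n - (k : ℕ) : ℝ) ^ 2 * (meanBound n k)⁻¹ / n = 1 := by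
      intro k
      calc _ = meanBound n k * (meanBound n k)⁻¹ := by
            nth_rewrite 3 [meanBound]
            ring
        _ = 1 := mul_inv_cancel₀ (hc k).ne'
    simp [this]
  have htot : B / n + n * (A / n ^ 3) = (n : ℝ) ^ n := by
    rw [sum_add_distrib, ← sum_div] at hone
    have : B / n + n * (A / n ^ 3) = (n : ℝ) ^ n / n * ((∑ k, (meanBound n k)⁻¹)
        + (∑ k : Fin n, (n - (k : ℕ) : ℝ) ^ 2 * (meanBound n k)⁻¹) / n) := by
      rw [hA, hB]
      field_simp
    rw [this, hone]
    field_simp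
  linarith

lemma sum_log_card_avail_le {n : ℕ} (hn : 0 < n) (L : Fin n → Fin n → Fin n)
    (hL : IsLatinSquare n L) (τ : Equiv.Perm (Fin n))
    (hτ : Function.Injective (fun i => L i (τ i))) :
    ∑ α : Fin n → Fin n, ∑ i, Real.log #(avail L α τ i)
      ≤ (n : ℝ) ^ n * ∑ k, Real.log (meanBound n k) := by
  rw [sum_comm]
  have h : ∀ i : Fin n, ∑ α : Fin n → Fin n, Real.log #(avail L α τ i)
      ≤ ∑ α : Fin n → Fin n, Real.log (meanBound n (α i)) := by
    intro i
    have hpt : ∀ α : Fin n → Fin n, Real.log #(avail L α τ i)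
        ≤ Real.log (meanBound n (α i)) + ((#(avail L α τ i) : ℝ) / meanBound n (α i) - 1) := by
      intro α
      have hpos : (0 : ℝ) < #(avail L α τ i) := by
        exact_mod_cast card_pos.2 ⟨_, mem_avail L α τ hτ i⟩
      have hc := meanBound_pos (α i)
      -- The tangent to `log` at `meanBound n (α i)` stands in for Jensen's inequality.
      have := Real.log_le_sub_one_of_pos (div_pos hpos hc)
      rw [Real.log_div hpos.ne' hc.ne'] at this
      linarith
    have h1 := sum_le_sum (fun α (_ : α ∈ univ) => hpt α)
    rw [sum_add_distrib, sum_sub_distrib] at h1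
    have h2 := sum_card_avail_le hn L hL τ hτ i
    simp only [sum_const, card_univ, Fintype.card_pi, Fintype.card_fin, prod_const, nsmul_eq_mul,
      Nat.cast_pow, mul_one] at h1
    linarith
  refine (sum_le_sum fun i _ => h i).trans (le_of_eq ?_)
  have hn' : (n : ℝ) ≠ 0 := by exact_mod_cast hn.ne'
  have h3 : ∀ i : Fin n, ∑ α : Fin n → Fin n, Real.log (meanBound n (α i))
      = (n : ℝ) ^ n * (∑ k, Real.log (meanBound n k)) / n := by
    intro i
    rw [eq_div_iff hn', mul_comm, sum_arrival i (fun k => Real.log (meanBound n k))]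
  simp_rw [h3]
  simp only [sum_const, card_univ, Fintype.card_fin, nsmul_eq_mul]
  field_simp

/-- The factor with index `m` is `meanBound` at the arrival time `n - 1 - m`. -/
lemma card_le_prod {n : ℕ} (hn : 0 < n) (L : Fin n → Fin n → Fin n) (hL : IsLatinSquare n L) :
    (Nat.card {τ : Equiv.Perm (Fin n) // Function.Injective (fun i => L i (τ i))} : ℝ)
      ≤ ∏ m ∈ range n, (1 + ((m + 1 : ℕ) : ℝ) ^ 2 / n) := by
  classical
  set G : ℝ := ∑ k, Real.log (meanBound n k) with hG
  have hexp : Real.exp G = ∏ m ∈ range n, (1 + ((m + 1 : ℕ) : ℝ) ^ 2 / n) := by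
    rw [hG, Real.exp_sum, ← prod_range_reflect, ← Fin.prod_univ_eq_prod_range
      (fun m => 1 + ((n - 1 - m + 1 : ℕ) : ℝ) ^ 2 / n)]
    refine prod_congr rfl fun k _ => ?_
    rw [Real.exp_log (meanBound_pos k), meanBound, ← Nat.cast_sub k.2.le]
    have : n - 1 - (k : ℕ) + 1 = n - k := by omega
    rw [this]
  rw [← hexp]
  have hpos : (0 : ℝ) < (n : ℝ) ^ n := by positivity
  have hlow : ∀ τ : {τ : Equiv.Perm (Fin n) // Function.Injective (fun i => L i (τ i))},
      (n : ℝ) ^ n * Real.exp (-G)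
        ≤ ∑ α : Fin n → Fin n, ∏ i, ((#(avail L α τ.1 i) : ℝ))⁻¹ := by
    rintro ⟨τ, hτ⟩
    -- The tangent to `exp` at `-G` bounds the mean of the products from below.
    have hpt : ∀ α : Fin n → Fin n,
        Real.exp (-G) * (1 + G - ∑ i, Real.log #(avail L α τ i))
          ≤ ∏ i, ((#(avail L α τ i) : ℝ))⁻¹ := by
      intro α
      have h1 : ∏ i, ((#(avail L α τ i) : ℝ))⁻¹
          = Real.exp (-G) * Real.exp (G - ∑ i, Real.log #(avail L α τ i)) := by
        rw [← Real.exp_add, ← add_sub_assoc, neg_add_cancel, zero_sub, Real.exp_neg, Real.exp_sum, prod_inv_distrib]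
        congr 1
        refine prod_congr rfl fun i _ => ?_
        rw [Real.exp_log]
        exact_mod_cast card_pos.2 ⟨_, mem_avail L α τ hτ i⟩
      rw [h1]
      refine mul_le_mul_of_nonneg_left ?_ (Real.exp_pos _).le
      linarith [Real.add_one_le_exp (G - ∑ i, Real.log #(avail L α τ i))]
    refine le_trans ?_ (sum_le_sum fun α _ => hpt α)
    rw [← mul_sum, mul_comm, sum_sub_distrib]
    refine mul_le_mul_of_nonneg_left ?_ (Real.exp_pos _).le
    have h2 := sum_log_card_avail_le hn L hL τ hτ
    simp only [sum_const, card_univ, Fintype.card_pi, Fintype.card_fin, prod_const, nsmul_eq_mul,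
      Nat.cast_pow]
    linarith
  have hsum := sum_le_sum (fun τ (_ : τ ∈ (univ : Finset
    {τ : Equiv.Perm (Fin n) // Function.Injective (fun i => L i (τ i))})) => hlow τ)
  rw [sum_comm] at hsum
  have hup := sum_le_sum (fun α (_ : α ∈ (univ : Finset (Fin n → Fin n))) =>
    sum_transversals_le_one hn L α)
  have h := hsum.trans hup
  rw [Nat.card_eq_fintype_card]
  simp only [sum_const, card_univ, Fintype.card_pi, Fintype.card_fin, prod_const, nsmul_eq_mul,
    Nat.cast_pow, mul_one] at h
  rw [Real.exp_neg, mul_left_comm] at h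
  have hone := (mul_le_iff_le_one_right hpos).1 h
  rwa [← div_eq_mul_inv, div_le_one (Real.exp_pos _)] at hone

/-! ### Asymptotics of the product -/

lemma factorial_le {n : ℕ} (hn : 0 < n) :
    (n.factorial : ℝ) ≤ Real.exp 1 * √n * (n / Real.exp 1) ^ n := by
  obtain ⟨m, rfl⟩ := Nat.exists_eq_succ_of_ne_zero hn.ne'
  have h : Stirling.stirlingSeq (m + 1) ≤ Stirling.stirlingSeq 1 :=
    Stirling.stirlingSeq'_antitone (Nat.zero_le m)
  rw [Stirling.stirlingSeq_one, Stirling.stirlingSeq, div_le_iff₀ (by positivity)] at h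
  refine h.trans (le_of_eq ?_)
  rw [Real.sqrt_mul (by norm_num)]
  field_simp

lemma prod_le {n : ℕ} (hn : 0 < n) :
    ∏ m ∈ range n, (1 + ((m + 1 : ℕ) : ℝ) ^ 2 / n)
      ≤ (n / Real.exp 2) ^ n
        * Real.exp (2 + Real.log n + 2 * (√n * (1 + Real.log n))) := by
  have hn' : (0 : ℝ) < n := by exact_mod_cast hn
  have hs : √(n : ℝ) ^ 2 = n := Real.sq_sqrt hn'.le
  have hpt : ∀ m ∈ range n, 1 + ((m + 1 : ℕ) : ℝ) ^ 2 / n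
      ≤ (((m + 1 : ℕ) : ℝ) ^ 2 / n) * Real.exp (2 * √n * ((m + 1 : ℕ) : ℝ)⁻¹) := by
    intro m _
    have hm : (0 : ℝ) < ((m + 1 : ℕ) : ℝ) := by positivity
    generalize ((m + 1 : ℕ) : ℝ) = x at hm
    have h1 : √n * x⁻¹ + 1 ≤ Real.exp (√n * x⁻¹) := Real.add_one_le_exp _
    have h2 : Real.exp (2 * √n * x⁻¹) = Real.exp (√n * x⁻¹) ^ 2 := by
      rw [← Real.exp_nat_mul]
      congr 1
      push_cast
      ring
    have h3 : (√n * x⁻¹ + 1) ^ 2 ≤ Real.exp (√n * x⁻¹) ^ 2 := by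
      gcongr
    have h4 : n * (x⁻¹) ^ 2 + 1 ≤ (√n * x⁻¹ + 1) ^ 2 := by
      have : 0 ≤ √n * x⁻¹ := by positivity
      nlinarith
    rw [h2]
    calc 1 + x ^ 2 / n = x ^ 2 / n * (n * (x⁻¹) ^ 2 + 1) := by
          field_simp
      _ ≤ _ := mul_le_mul_of_nonneg_left (h4.trans h3) (by positivity)
  refine (prod_le_prod (fun m _ => by positivity) hpt).trans ?_
  rw [prod_mul_distrib, ← Real.exp_sum, ← mul_sum, prod_div_distrib, prod_pow, prod_const,
    card_range]
  have hfac : ∏ m ∈ range n, ((m + 1 : ℕ) : ℝ) = n.factorial := by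
    rw [← prod_range_add_one_eq_factorial]
    push_cast
    rfl
  have hharm : ∑ m ∈ range n, ((m + 1 : ℕ) : ℝ)⁻¹ ≤ 1 + Real.log n := by
    have := harmonic_le_one_add_log n
    simpa [harmonic] using this
  rw [hfac, add_assoc, Real.exp_add, Real.exp_add, Real.exp_log hn']
  have h1 : (n.factorial : ℝ) ^ 2 / n ^ n ≤ (n / Real.exp 2) ^ n * (Real.exp 2 * n) := by
    have he : Real.exp 2 = Real.exp 1 ^ 2 := by
      rw [← Real.exp_nat_mul]
      norm_num
    have h := pow_le_pow_left₀ (by positivity) (factorial_le hn) 2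
    rw [div_le_iff₀ (by positivity)]
    refine h.trans (le_of_eq ?_)
    rw [he, mul_pow, mul_pow, hs, div_pow, div_pow, div_pow]
    field_simp
    ring
  have h2 : Real.exp (2 * √n * ∑ m ∈ range n, ((m + 1 : ℕ) : ℝ)⁻¹)
      ≤ Real.exp (2 * (√n * (1 + Real.log n))) := by
    rw [← mul_assoc]
    gcongr
  calc _ ≤ ((n / Real.exp 2) ^ n * (Real.exp 2 * n)) * Real.exp (2 * (√n * (1 + Real.log n))) := by
        gcongr
    _ = _ := by ring

lemma error_isLittleO :
    (fun x : ℝ => 2 + Real.log x + 2 * (√x * (1 + Real.log x))) =o[atTop] (fun x : ℝ => x) := by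
  have hconst : (fun _ : ℝ => (2 : ℝ)) =o[atTop] (fun x : ℝ => x) :=
    isLittleO_const_id_atTop _
  have hlog : Real.log =o[atTop] (fun x : ℝ => x) := Real.isLittleO_log_id_atTop
  have hsqrt : (fun x : ℝ => 1 + Real.log x) =o[atTop] (fun x : ℝ => √x) := by
    have h1 : (fun _ : ℝ => (1 : ℝ)) =o[atTop] (fun x : ℝ => √x) := by
      rw [isLittleO_const_left]
      right
      exact tendsto_norm_atTop_atTop.comp Real.tendsto_sqrt_atTop
    have h2 : Real.log =o[atTop] (fun x : ℝ => √x) := by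
      simp_rw [Real.sqrt_eq_rpow]
      exact isLittleO_log_rpow_atTop (by norm_num)
    exact h1.add h2
  have hmul : (fun x : ℝ => √x * (1 + Real.log x)) =o[atTop] (fun x : ℝ => x) := by
    refine ((isBigO_refl (fun x : ℝ => √x) atTop).mul_isLittleO hsqrt).congr' EventuallyEq.rfl ?_
    filter_upwards [eventually_ge_atTop 0] with x hx
    exact Real.mul_self_sqrt hx
  exact (hconst.add hlog).add (hmul.const_mul_left 2)

theorem transversals_upper_bound :
    ∀ ε : ℝ, 0 < ε → ∃ N : ℕ, ∀ n : ℕ, N ≤ n →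
      ∀ L : Fin n → Fin n → Fin n, IsLatinSquare n L →
        (Nat.card {τ : Equiv.Perm (Fin n) //
            Function.Injective (fun i => L i (τ i))} : ℝ) ≤
          ((1 + ε) * n / Real.exp 2) ^ n := by
  intro ε hε
  have hlog : 0 < Real.log (1 + ε) := Real.log_pos (by linarith)
  have hev := tendsto_natCast_atTop_atTop.eventually (error_isLittleO.bound hlog)
  obtain ⟨N, hN⟩ := eventually_atTop.1 (hev.and (eventually_gt_atTop 0))
  refine ⟨N, fun n hn L hL => ?_⟩
  obtain ⟨hb, hpos⟩ := hN n hn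
  have hpos' : 0 < n := by exact_mod_cast hpos
  refine ((card_le_prod hpos' L hL).trans (prod_le hpos')).trans ?_
  rw [mul_div_assoc, mul_pow, mul_comm]
  refine mul_le_mul_of_nonneg_right ?_ (by positivity)
  have h1 := (le_abs_self _).trans hb
  rw [Real.norm_eq_abs, abs_of_nonneg (by positivity), mul_comm (Real.log (1 + ε))] at h1
  calc _ ≤ Real.exp (n * Real.log (1 + ε)) := Real.exp_le_exp.2 h1
    _ = _ := by rw [Real.exp_nat_mul, Real.exp_log (by linarith)]
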